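/- The formal power series G(t;0,0) = Σ_{n≥0} g(n;0,0) tⁿ ∈ ℚ[[t]], the generating function of Gessel excursions, is algebraic: there exists a nonzero polynomial P(T,t) ∈ ℚ[T,t] such that P(G(t;0,0), t) = 0 in ℚ[[t]]. -/

import Mathlib

/-! The proof uses an elementary form of Tutte's invariants. Write `Q(x,y)` for the full generating
function of Gessel walks and `q = Q(0,0)`. Deleting the last step of a walk gives
`Ser.functional_equation`, whose kernel `t (1 + y) (1 + x² y) - x y` vanishes on a curve where `t`
is a power series in `x` and `y` (`Ser.curve`). On this curve the functional equation becomes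
`t ((1 + y) Q(0,y) + Q(x,0) - q) = x y`.

The curve carries a rational identity between functions of `(x, t)` and functions of `(y, t)`.
Together with the functional equation it yields a polynomial in `x`, `t`, `Q(x,0)` and a polynomial
in `y`, `t`, `1 / (1 + y)`, `Q(0,y)` that agree on the curve (`Ser.curve_identity`). A series in
`x, t` and a series in `y, t` that agree on the curve must be equal and depend on `t` only
(`Ser.eq_of_curve_eq`). Hence there are series `β`, `l` in `t` such that the cubic
`s³ - (1 + 2 t² q) s² + (e - β) s - l` is a square times another factor at
`s = (t + t² x Q(x,0)) / x` for `e = 1/4`, and at `s = y / (1 + y) - t² y Q(0,y) - t² (Q(0,y) - q)`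
for `e = ±2 t - 4 t²` (`Ser.cubics`).

At the zeros of the squared factors, which are power series in `t` of Catalan type, the cubic has a
double root (`Ser.double_root_x`, `Ser.double_root_y`). So the cubic has a double root for three
different values of `e`. These double roots are the three roots of `2 s³ - (1 + 2 t² q) s² + l`;
Vieta's formulas and the three known differences of the `e`s determine the roots up to finitely many
choices (`Ser.isAlgebraic_of_double_roots`). Therefore their sum, and with it `q`, is algebraic. -/

noncomputable section

/-- The set of admissible steps for Gessel walks. -/
def gesselSteps : Set (ℤ × ℤ) := {(1, 0), (-1, 0), (1, 1), (-1, -1)}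

/-- The position of the walk `w` after its first `k` steps. -/
def walkPos {n : ℕ} (w : Fin n → ℤ × ℤ) (k : ℕ) : ℤ × ℤ :=
  ∑ m ∈ Finset.univ.filter (fun m : Fin n => (m : ℕ) < k), w m

/-- `w` is a Gessel walk: every step is admissible and the walk (which starts at
the origin) never leaves the first quadrant. -/
def IsGesselWalk {n : ℕ} (w : Fin n → ℤ × ℤ) : Prop :=
  (∀ m, w m ∈ gesselSteps) ∧ ∀ k ≤ n, 0 ≤ (walkPos w k).1 ∧ 0 ≤ (walkPos w k).2

/-- The number of Gessel walks of length `n` ending at `(i, j)`. -/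
def g (n : ℕ) (i j : ℤ) : ℕ :=
  Nat.card {w : Fin n → ℤ × ℤ // IsGesselWalk w ∧ walkPos w n = (i, j)}

/-- The generating function `G(t;0,0)` of Gessel excursions. -/
def GesselGF00 : PowerSeries ℚ := PowerSeries.mk fun n => (g n 0 0 : ℚ)

/-! ### Counting walks by their last step -/

/-- The four Gessel steps, indexed by `Fin 4`. -/
def gStep : Fin 4 → ℤ × ℤ := ![(1, 0), (-1, 0), (1, 1), (-1, -1)]

lemma gStep_injective : Function.Injective gStep := by decide

lemma mem_gesselSteps_iff (s : ℤ × ℤ) : s ∈ gesselSteps ↔ ∃ k, gStep k = s := by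
  simp [gesselSteps, gStep, Fin.exists_fin_succ, eq_comm]

lemma walkPos_snoc_le {n : ℕ} (w : Fin n → ℤ × ℤ) (s : ℤ × ℤ) {k : ℕ} (hk : k ≤ n) :
    walkPos (Fin.snoc w s : Fin (n + 1) → ℤ × ℤ) k = walkPos w k := by
  have : ¬ n < k := by omega
  simp [walkPos, Finset.sum_filter, Fin.sum_univ_castSucc, this]

lemma walkPos_snoc_succ {n : ℕ} (w : Fin n → ℤ × ℤ) (s : ℤ × ℤ) :
    walkPos (Fin.snoc w s : Fin (n + 1) → ℤ × ℤ) (n + 1) = walkPos w n + s := by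
  simp [walkPos, Finset.sum_filter, Fin.sum_univ_castSucc]

/-- A walk with a last step `s` is a Gessel walk iff the walk without it is, `s` is admissible, and
the new end point lies in the quadrant. -/
lemma isGesselWalk_snoc {n : ℕ} (w : Fin n → ℤ × ℤ) (s : ℤ × ℤ) :
    IsGesselWalk (Fin.snoc w s : Fin (n + 1) → ℤ × ℤ) ↔
      IsGesselWalk w ∧ s ∈ gesselSteps ∧ 0 ≤ (walkPos w n + s).1 ∧ 0 ≤ (walkPos w n + s).2 := by
  constructor
  · rintro ⟨h1, h2⟩
    refine ⟨⟨fun m => by simpa using h1 m.castSucc, fun k hk => ?_⟩, ?_, ?_⟩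
    · simpa only [walkPos_snoc_le w s hk] using h2 k (by omega)
    · simpa using h1 (Fin.last n)
    · simpa only [walkPos_snoc_succ] using h2 (n + 1) le_rfl
  · rintro ⟨⟨h1, h2⟩, hs, h3⟩
    refine ⟨fun m => ?_, fun k hk => ?_⟩
    · refine Fin.lastCases ?_ (fun m => ?_) m
      · simpa using hs
      · simpa using h1 m
    · rcases Nat.lt_or_ge n k with h | h
      · obtain rfl : k = n + 1 := by omega
        simpa only [walkPos_snoc_succ] using h3
      · simpa only [walkPos_snoc_le w s h] using h2 k h

/-- The Gessel walks of length `n` ending at `p`. -/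
abbrev Walks (n : ℕ) (p : ℤ × ℤ) : Type :=
  {w : Fin n → ℤ × ℤ // IsGesselWalk w ∧ walkPos w n = p}

instance (n : ℕ) (p : ℤ × ℤ) : Finite (Walks n p) := by
  have hfin : ({w : Fin n → ℤ × ℤ | ∀ m, w m ∈ gesselSteps}).Finite :=
    Set.Finite.pi' fun _ => by simp [gesselSteps]
  exact (hfin.subset fun w hw => hw.1.1).to_subtype

/-- Appending a step to a walk. -/
def extendWalk {n : ℕ} {p : ℤ × ℤ} (h1 : 0 ≤ p.1) (h2 : 0 ≤ p.2)
    (x : Σ k : Fin 4, Walks n (p - gStep k)) : Walks (n + 1) p :=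
  have hend : walkPos x.2.1 n + gStep x.1 = p := by rw [x.2.2.2]; abel
  ⟨Fin.snoc x.2.1 (gStep x.1), by
    rw [isGesselWalk_snoc, walkPos_snoc_succ, hend]
    exact ⟨⟨x.2.2.1, (mem_gesselSteps_iff _).2 ⟨_, rfl⟩, h1, h2⟩, rfl⟩⟩

lemma extendWalk_bijective {n : ℕ} {p : ℤ × ℤ} (h1 : 0 ≤ p.1) (h2 : 0 ≤ p.2) :
    Function.Bijective (extendWalk (n := n) h1 h2) := by
  constructor
  · rintro ⟨k, w, hw⟩ ⟨k', w', hw'⟩ h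
    have h := congrArg Subtype.val h
    simp only [extendWalk] at h
    obtain ⟨rfl, hk⟩ := Fin.snoc_injective2 h
    obtain rfl := gStep_injective hk
    rfl
  · rintro ⟨w, hw, hp⟩
    obtain ⟨w, s, rfl⟩ : ∃ w' s, w = Fin.snoc w' s := ⟨_, _, (Fin.snoc_init_self w).symm⟩
    obtain ⟨h, hs, -⟩ := (isGesselWalk_snoc w s).1 hw
    obtain ⟨k, rfl⟩ := (mem_gesselSteps_iff s).1 hs
    rw [walkPos_snoc_succ] at hp
    exact ⟨⟨k, w, h, eq_sub_of_add_eq hp⟩, rfl⟩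

/-- The recurrence obtained by removing the last step. -/
lemma g_succ (n : ℕ) {i j : ℤ} (hi : 0 ≤ i) (hj : 0 ≤ j) :
    g (n + 1) i j = g n (i - 1) j + g n (i + 1) j + g n (i - 1) (j - 1) + g n (i + 1) (j + 1) := by
  have := Nat.card_congr (Equiv.ofBijective _ (extendWalk_bijective (n := n) (p := (i, j)) hi hj))
  rw [Nat.card_sigma] at this
  rw [g, ← this, Fin.sum_univ_four]
  simp [g, gStep]

lemma g_eq_zero (n : ℕ) {i j : ℤ} (h : i < 0 ∨ j < 0) : g n i j = 0 := by
  have : IsEmpty (Walks n (i, j)) := ⟨fun ⟨w, hw, hp⟩ => by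
    have := hw.2 n le_rfl
    rw [hp] at this
    simp only at this
    omega⟩
  exact Nat.card_of_isEmpty

lemma g_zero (i j : ℤ) : g 0 i j = if i = 0 ∧ j = 0 then 1 else 0 := by
  have hw (w : Fin 0 → ℤ × ℤ) (k : ℕ) : walkPos w k = 0 := by simp [walkPos]
  split_ifs with h
  · obtain ⟨rfl, rfl⟩ := h
    rw [g, Nat.card_eq_one_iff_unique]
    exact ⟨inferInstance, ⟨⟨Fin.elim0, ⟨fun m => m.elim0, fun k _ => by simp [hw]⟩, hw _ _⟩⟩⟩
  · have : IsEmpty (Walks 0 (i, j)) := ⟨fun ⟨w, _, hp⟩ => by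
      rw [hw] at hp
      simp [Prod.ext_iff] at hp
      omega⟩
    exact Nat.card_of_isEmpty

/-! ### Formal power series in `x`, `y`, `t` and substitutions -/

open MvPowerSeries in
/-- The ring `ℚ⟦x, y, t⟧`; the variables `x`, `y`, `t` have the indices `0`, `1`, `2`. -/
abbrev Ser : Type := MvPowerSeries (Fin 3) ℚ

namespace Ser

open MvPowerSeries

/-- The variable `x` (horizontal position). -/
def x : Ser := X 0

/-- The variable `y` (vertical position). -/
def y : Ser := X 1

/-- The variable `t` (length). -/
def t : Ser := X 2

/-- The substitution `x ↦ a 0`, `y ↦ a 1`, `t ↦ a 2` by series without constant term. -/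
def ev {τ : Type} (a : Fin 3 → MvPowerSeries τ ℚ) (ha : ∀ i, constantCoeff (a i) = 0) :
    Ser →ₐ[ℚ] MvPowerSeries τ ℚ :=
  substAlgHom (hasSubst_of_constantCoeff_zero ha)

section ev

variable {τ : Type} {a b : Fin 3 → MvPowerSeries τ ℚ} (ha : ∀ i, constantCoeff (a i) = 0)
  (hb : ∀ i, constantCoeff (b i) = 0)

@[simp] lemma ev_x : ev a ha x = a 0 := substAlgHom_X _ _
@[simp] lemma ev_y : ev a ha y = a 1 := substAlgHom_X _ _
@[simp] lemma ev_t : ev a ha t = a 2 := substAlgHom_X _ _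

lemma ev_X (i : Fin 3) : ev a ha (X i) = a i := substAlgHom_X _ _

lemma constantCoeff_ev (F : Ser) : constantCoeff (ev a ha F) = constantCoeff F := by
  have h : F = C (constantCoeff F) + (F - C (constantCoeff F)) := by ring
  have h1 : ev a ha (C (constantCoeff F)) = C (constantCoeff F) :=
    (ev a ha).commutes _
  conv_lhs => rw [h]
  rw [map_add, map_add, h1, ev, substAlgHom_apply,
    constantCoeff_subst_eq_zero (hasSubst_of_constantCoeff_zero ha) ha (by simp)]
  simp

lemma ev_ev {σ : Type} {c : Fin 3 → MvPowerSeries σ ℚ} {d : Fin 3 → Ser}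
    (hd : ∀ i, constantCoeff (d i) = 0) (hc : ∀ i, constantCoeff (c i) = 0) (F : Ser) :
    ev c hc (ev d hd F) = ev (fun i => ev c hc (d i)) (fun i => by
      rw [constantCoeff_ev, hd]) F := by
  simp only [ev, substAlgHom_apply]
  exact subst_comp_subst_apply (hasSubst_of_constantCoeff_zero hd)
    (hasSubst_of_constantCoeff_zero hc) F

/-- A series in which `X i` does not occur has the same value under substitutions that differ
only at `X i`. -/
lemma ev_congr_of_coeff {i : Fin 3} {F : Ser} (hF : ∀ m, m i ≠ 0 → coeff m F = 0)
    (hab : ∀ j, j ≠ i → a j = b j) : ev a ha F = ev b hb F := by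
  ext e
  simp only [ev, substAlgHom_apply]
  rw [coeff_subst (hasSubst_of_constantCoeff_zero ha),
    coeff_subst (hasSubst_of_constantCoeff_zero hb)]
  refine finsum_congr fun m => ?_
  by_cases hm : m i = 0
  · congr 2
    refine Finsupp.prod_congr fun j hj => ?_
    rw [hab j (by rintro rfl; simp [hm] at hj)]
  · simp [hF m hm]

end ev

lemma ev_self (F : Ser) : ev (X : Fin 3 → Ser) (fun i => constantCoeff_X i) F = F := by
  simp [ev, substAlgHom_apply, subst_self]

/-- The substitution `X i ↦ 0`. -/
def kill (i : Fin 3) : Ser →ₐ[ℚ] Ser :=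
  ev (Function.update X i 0) fun j => by
    rcases eq_or_ne j i with rfl | h <;> simp [*]

lemma kill_X_self (i : Fin 3) : kill i (X i) = 0 := by simp [kill, ev_X]

lemma kill_X {i j : Fin 3} (h : j ≠ i) : kill i (X j) = X j := by simp [kill, ev_X, h]

lemma kill_of_coeff {i : Fin 3} {F : Ser} (hF : ∀ m, m i ≠ 0 → coeff m F = 0) :
    kill i F = F := by
  conv_rhs => rw [← ev_self F]
  exact ev_congr_of_coeff _ _ hF fun j hj => by simp [hj]

/-- `kill i` keeps exactly the monomials in which `X i` does not occur. -/
lemma coeff_kill (i : Fin 3) (F : Ser) (m : Fin 3 →₀ ℕ) :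
    coeff m (kill i F) = if m i = 0 then coeff m F else 0 := by
  -- The expected value `F₀` differs from `F` by a multiple of `X i`, which `kill i` sends to `0`.
  set F₀ : Ser := fun m => if m i = 0 then coeff m F else 0 with hF₀
  have hc (m) : coeff m F₀ = if m i = 0 then coeff m F else 0 := rfl
  obtain ⟨F₁, h⟩ : X i ∣ F - F₀ := X_dvd_iff.2 fun m hm => by simp [hc, hm]
  have h1 : kill i F₀ = F₀ := kill_of_coeff fun m hm => by simp [hc, hm]
  have h2 : kill i F = F₀ := by
    have := congrArg (kill i) h
    rw [map_sub, map_mul, kill_X_self, zero_mul, h1] at this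
    exact sub_eq_zero.1 this
  rw [h2, hc]

/-- `X i` does not occur in `F`. -/
def Free (i : Fin 3) (F : Ser) : Prop := kill i F = F

lemma free_iff {i : Fin 3} {F : Ser} : Free i F ↔ ∀ m, m i ≠ 0 → coeff m F = 0 := by
  refine ⟨fun h m hm => ?_, kill_of_coeff⟩
  rw [← h, coeff_kill, if_neg hm]

lemma X_dvd_sub_kill (i : Fin 3) (F : Ser) : X i ∣ F - kill i F :=
  X_dvd_iff.2 fun m hm => by simp [coeff_kill, hm]

lemma free_kill (i : Fin 3) (F : Ser) : Free i (kill i F) :=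
  free_iff.2 fun m hm => by simp [coeff_kill, hm]

lemma Free.kill {i : Fin 3} {F : Ser} (h : Free i F) (j : Fin 3) : Free i (kill j F) :=
  free_iff.2 fun m hm => by simp [coeff_kill, free_iff.1 h m hm]

lemma ev_congr {τ : Type} {a b : Fin 3 → MvPowerSeries τ ℚ} (ha : ∀ i, constantCoeff (a i) = 0)
    (hb : ∀ i, constantCoeff (b i) = 0) {i : Fin 3} {F : Ser} (hF : Free i F)
    (hab : ∀ j, j ≠ i → a j = b j) : ev a ha F = ev b hb F :=
  ev_congr_of_coeff ha hb (free_iff.1 hF) hab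

/-- If `X i` does not occur in `X j * F` with `j ≠ i`, it does not occur in `F`. -/
lemma free_of_X_mul {i j : Fin 3} (h : j ≠ i) {F : Ser} (hF : Free i (X j * F)) : Free i F := by
  rw [Free, map_mul, kill_X h] at hF
  exact mul_left_cancel₀ (nonZeroDivisors.ne_zero (X_mem_nonzeroDivisors)) hF

/-- The coefficient of `x ^ i * y ^ j * t ^ n`. -/
def cf (i j n : ℕ) : Ser →ₗ[ℚ] ℚ :=
  coeff (Finsupp.equivFunOnFinite.symm ![i, j, n])

lemma ext_cf {F G : Ser} (h : ∀ i j n, cf i j n F = cf i j n G) : F = G := by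
  ext m
  convert h (m 0) (m 1) (m 2) using 2 <;>
  · congr 1
    ext k; fin_cases k <;> simp

lemma cf_X_mul (k : Fin 3) (i j n : ℕ) (F : Ser) :
    cf i j n (X k * F) = if ![i, j, n] k = 0 then 0 else
      coeff (Finsupp.equivFunOnFinite.symm (Function.update ![i, j, n] k (![i, j, n] k - 1))) F := by
  rw [cf, X_def, coeff_monomial_mul]
  rcases Nat.eq_zero_or_pos (![i, j, n] k) with h | h
  · rw [if_pos h, if_neg]
    simp [h]
  · rw [if_pos (Finsupp.single_le_iff.2 h), if_neg h.ne', one_mul]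
    congr 2
    ext l
    by_cases hl : l = k
    · subst hl; simp
    · simp [hl]

@[simp] lemma cf_x_zero (j n : ℕ) (F : Ser) : cf 0 j n (x * F) = 0 := by simp [x, cf_X_mul]
@[simp] lemma cf_y_zero (i n : ℕ) (F : Ser) : cf i 0 n (y * F) = 0 := by simp [y, cf_X_mul]
@[simp] lemma cf_t_zero (i j : ℕ) (F : Ser) : cf i j 0 (t * F) = 0 := by simp [t, cf_X_mul]
@[simp] lemma cf_x_succ (i j n : ℕ) (F : Ser) : cf (i + 1) j n (x * F) = cf i j n F := by
  rw [x, cf_X_mul, if_neg (by simp), cf]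
  congr 2; ext k; fin_cases k <;> simp
@[simp] lemma cf_y_succ (i j n : ℕ) (F : Ser) : cf i (j + 1) n (y * F) = cf i j n F := by
  rw [y, cf_X_mul, if_neg (by simp), cf]
  congr 2; ext k; fin_cases k <;> simp
@[simp] lemma cf_t_succ (i j n : ℕ) (F : Ser) : cf i j (n + 1) (t * F) = cf i j n F := by
  rw [t, cf_X_mul, if_neg (by simp), cf]
  congr 2; ext k; fin_cases k <;> simp
@[simp] lemma cf_kill0 (i j n : ℕ) (F : Ser) :
    cf i j n (kill 0 F) = if i = 0 then cf i j n F else 0 := by simp [cf, coeff_kill]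
@[simp] lemma cf_kill1 (i j n : ℕ) (F : Ser) :
    cf i j n (kill 1 F) = if j = 0 then cf i j n F else 0 := by simp [cf, coeff_kill]
@[simp] lemma cf_one (i j n : ℕ) : cf i j n 1 = if i = 0 ∧ j = 0 ∧ n = 0 then 1 else 0 := by
  rw [cf, coeff_one]
  congr 1
  rw [Finsupp.ext_iff, Fin.forall_fin_succ, Fin.forall_fin_succ, Fin.forall_fin_succ]
  simp

/-- The full generating function of Gessel walks by end point and length. -/
def Q : Ser := fun m => (g (m 2) (m 0) (m 1) : ℚ)

@[simp] lemma cf_Q (i j n : ℕ) : cf i j n Q = g n i j := by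
  simp [cf, coeff_apply, Q]

/-- The functional equation obtained by deleting the last step of a walk, multiplied by `x * y`:
steps that would leave the quadrant are removed by the terms in `Q(0,y)` and `Q(x,0)`. -/
lemma functional_equation : x * (y * Q) = x * (y * 1) + (t * (x * (x * (y * Q))) + t * (y * Q)
    + t * (x * (x * (y * (y * Q)))) + t * Q) - t * kill 0 Q - t * (y * kill 0 Q) - t * kill 1 Q
    + t * kill 0 (kill 1 Q) := by
  refine ext_cf fun i j n => ?_
  simp only [map_add, map_sub]
  rcases n with _ | n
  · rcases i with _ | i <;> rcases j with _ | j <;> simp [g_zero, -mul_one]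
  · rcases i with _ | i
    · rcases j with _ | j <;> simp [-mul_one]
    · rcases j with _ | j
      · rcases i with _ | i <;> simp [-mul_one]
      · have := g_succ n (i := i) (j := j) (by positivity) (by positivity)
        have : (g (n + 1) i j : ℚ) = _ := congrArg Nat.cast this
        push_cast at this
        rcases i with _ | i <;> rcases j with _ | j <;>
        simp [-mul_one, g_eq_zero] at this ⊢ <;> rw [this]

/-! ### The kernel curve and the invariant lemma -/

lemma x_ne_zero : x ≠ 0 := nonZeroDivisors.ne_zero X_mem_nonzeroDivisors
lemma y_ne_zero : y ≠ 0 := nonZeroDivisors.ne_zero X_mem_nonzeroDivisors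
lemma t_ne_zero : t ≠ 0 := nonZeroDivisors.ne_zero X_mem_nonzeroDivisors

@[simp] lemma constantCoeff_x : constantCoeff x = 0 := constantCoeff_X _
@[simp] lemma constantCoeff_y : constantCoeff y = 0 := constantCoeff_X _
@[simp] lemma constantCoeff_t : constantCoeff t = 0 := constantCoeff_X _

@[simp] lemma kill0_x : kill 0 x = 0 := kill_X_self 0
@[simp] lemma kill0_y : kill 0 y = y := kill_X (by decide)
@[simp] lemma kill0_t : kill 0 t = t := kill_X (by decide)
@[simp] lemma kill1_x : kill 1 x = x := kill_X (by decide)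
@[simp] lemma kill1_y : kill 1 y = 0 := kill_X_self 1
@[simp] lemma kill1_t : kill 1 t = t := kill_X (by decide)

/-- The series `1 / (1 + y)`. -/
def v : Ser := (1 + y)⁻¹

lemma one_add_y_mul_v : (1 + y) * v = 1 := MvPowerSeries.mul_inv_cancel _ (by simp)

@[simp] lemma constantCoeff_v : constantCoeff v = 1 := by simp [v]

/-- The value `x * y / ((1 + y) * (1 + x ^ 2 * y))` of `t` at which the kernel
`t * (1 + y) * (1 + x ^ 2 * y) - x * y` vanishes. -/
def tau : Ser := x * y * v * (1 + x ^ 2 * y)⁻¹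

lemma tau_kernel : tau * (1 + y) * (1 + x ^ 2 * y) = x * y := by
  have h : (1 + x ^ 2 * y) * (1 + x ^ 2 * y)⁻¹ = 1 := MvPowerSeries.mul_inv_cancel _ (by simp)
  rw [tau]
  linear_combination x * y * (1 + x ^ 2 * y) * (1 + x ^ 2 * y)⁻¹ * one_add_y_mul_v + x * y * h

lemma tau_ne_zero : tau ≠ 0 := fun h => by
  have := tau_kernel
  rw [h, zero_mul, zero_mul] at this
  exact mul_ne_zero x_ne_zero y_ne_zero this.symm

lemma constantCoeff_tau : constantCoeff tau = 0 := by simp [tau]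

/-- The restriction of a series to the kernel curve, parametrized by `x` and `y`. -/
def curve : Ser →ₐ[ℚ] Ser := ev ![x, y, tau] fun i => by
  fin_cases i <;> simp [constantCoeff_tau]

@[simp] lemma curve_x : curve x = x := ev_x _
@[simp] lemma curve_y : curve y = y := ev_y _
@[simp] lemma curve_t : curve t = tau := ev_t _

lemma ev_zero {τ : Type} (F : Ser) :
    ev (fun _ => (0 : MvPowerSeries τ ℚ)) (fun _ => map_zero _) F = C (constantCoeff F) := by
  rw [ev, substAlgHom_apply]
  exact subst_zero_eq_C_constantCoeff

lemma constantCoeff_curve (F : Ser) : constantCoeff (curve F) = constantCoeff F :=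
  constantCoeff_ev _ _

/-- On the curve, `y = 0` forces `t = 0`. -/
lemma kill1_curve (F : Ser) :
    kill 1 (curve F) = ev ![x, 0, 0] (fun i => by fin_cases i <;> simp) F := by
  rw [kill, curve, ev_ev]
  congr 2
  ext1 i
  change kill 1 _ = _
  fin_cases i <;> simp [tau]

/-- On the curve, `x = 0` forces `t = 0`. -/
lemma kill0_curve (F : Ser) :
    kill 0 (curve F) = ev ![0, y, 0] (fun i => by fin_cases i <;> simp) F := by
  rw [kill, curve, ev_ev]
  congr 2
  ext1 i
  change kill 0 _ = _
  fin_cases i <;> simp [tau]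

/-- If a series in `x, t` and a series in `y, t` agree on the kernel curve, then both are constant
at `t = 0`: compare the two restrictions of the common value to `y = 0` and to `x = 0`. -/
lemma kill2_eq_of_curve_eq {F G : Ser} (hF : Free 1 F) (hG : Free 0 G)
    (h : curve F = curve G) : kill 2 F = C (constantCoeff G) ∧ kill 2 G = C (constantCoeff F) := by
  have h1 := congrArg (kill 1) h
  have h0 := congrArg (kill 0) h
  rw [kill1_curve, kill1_curve] at h1
  rw [kill0_curve, kill0_curve] at h0
  constructor
  · rw [← ev_zero, kill, ev_congr (b := ![x, 0, 0]) _ (fun i => by fin_cases i <;> simp) hF, h1]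
    · refine ev_congr _ _ hG fun j hj => ?_
      fin_cases j <;> simp_all
    · intro j hj
      fin_cases j <;> simp_all [x, Function.update]
  · rw [← ev_zero, kill, ev_congr (b := ![0, y, 0]) _ (fun i => by fin_cases i <;> simp) hG, ← h0]
    · refine ev_congr _ _ hF fun j hj => ?_
      fin_cases j <;> simp_all
    · intro j hj
      fin_cases j <;> simp_all [y, Function.update]

/-- The invariant lemma: a series in `x, t` and a series in `y, t` that agree on the kernel curve
are equal, so that they depend on `t` only. By `kill2_eq_of_curve_eq` their parts at `t = 0` are the
same constant; after subtracting it one divides by `t` and repeats. -/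
lemma eq_of_curve_eq {F G : Ser} (hF : Free 1 F) (hG : Free 0 G) (h : curve F = curve G) :
    F = G := by
  have key (n : ℕ) : ∀ {F G : Ser}, Free 1 F → Free 0 G → curve F = curve G → t ^ n ∣ F - G := by
    induction n with
    | zero => simp
    | succ n ih =>
      intro F G hF hG h
      have hc : constantCoeff F = constantCoeff G := by
        rw [← constantCoeff_curve, h, constantCoeff_curve]
      obtain ⟨h1, h2⟩ := kill2_eq_of_curve_eq hF hG h
      obtain ⟨F', hF'⟩ := X_dvd_sub_kill 2 F
      obtain ⟨G', hG'⟩ := X_dvd_sub_kill 2 G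
      have hFf : Free 1 F' := free_of_X_mul (j := 2) (by decide) (by
        rw [← hF', Free, map_sub, hF, hF.kill 2])
      have hGf : Free 0 G' := free_of_X_mul (j := 2) (by decide) (by
        rw [← hG', Free, map_sub, hG, hG.kill 2])
      rw [h1, ← hc] at hF'
      rw [h2] at hG'
      obtain ⟨D, hD⟩ := ih hFf hGf (mul_left_cancel₀ tau_ne_zero (by
        rw [← curve_t, ← map_mul, ← map_mul]
        change curve (X 2 * F') = curve (X 2 * G')
        rw [← hF', ← hG', map_sub, map_sub, h]))
      refine ⟨D, ?_⟩
      change F - _ = t * F' at hF'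
      change G - _ = t * G' at hG'
      linear_combination hF' - hG' + t * hD
  refine sub_eq_zero.1 (MvPowerSeries.ext fun m => ?_)
  exact X_pow_dvd_iff.1 (key (m 2 + 1) hF hG h) m (Nat.lt_succ_self _)

/-! ### The two cubic equations -/

/-- The identity between invariants on the kernel curve. Here `q + x * a = Q(x,0)`,
`q + y * b = Q(0,y)`, `h1` is the kernel equation and `h2` is the functional equation on the curve.
The left side involves only `x` and `t`, the right side only `y` and `t`. The proof compares a
function `d` of `x, t` and a function `e` of `y, t` with `y * d = e` on the curve, subtracts the
pole of `e / y` at `y = 0`, which corresponds to `x = 0`, and multiplies by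
`t + t ^ 2 * x * Q(x,0)`, divided by `x`. -/
lemma curve_identity {R : Type*} [CommRing R] [IsDomain R] {x y t v q a b d0 d1 : R}
    (hx : x ≠ 0) (hy : y ≠ 0) (ht : t ≠ 0) (hv : (1 + y) * v = 1)
    (h1 : t * (1 + y) * (1 + x ^ 2 * y) = x * y)
    (h2 : t * ((1 + y) * (q + y * b) + x * a) = x * y)
    (hd : 2 * t ^ 2 * a + t ^ 3 * x ^ 2 * a ^ 2 - t * x * a + x - t * x ^ 2 - 2 * t
      = d0 + x * d1) :
    t * (d1 + (t * x * a + t * q) * (d0 + x * d1) - d0 * (t * x * a)) =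
      (v - t ^ 2 * (q + y * b) - t ^ 2 * b) * (t * (t ^ 2 * y * (1 + y) ^ 2 * (q + y * b) ^ 2
        + y * (1 - y) * (q + y * b) + (1 - y) ^ 2)) -
      d0 * (y * v - t ^ 2 * (1 + y) * (q + y * b)) := by
  obtain ⟨d, hd'⟩ : ∃ d, d = d0 + x * d1 := ⟨_, rfl⟩
  obtain ⟨e, he⟩ : ∃ e, e = t * (t ^ 2 * y * (1 + y) ^ 2 * (q + y * b) ^ 2
        + y * (1 - y) * (q + y * b) + (1 - y) ^ 2) := ⟨_, rfl⟩
  rw [← hd', ← he]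
  rw [← hd'] at hd
  have hJ : t + t ^ 2 * x ^ 2 * a = x * (y * v - t ^ 2 * (1 + y) * (q + y * b)) := by
    linear_combination t * x * h2 + v * h1 - t * (1 + x ^ 2 * y) * hv
  have hw : x * y * v = t * (1 + x ^ 2 * y) := by
    linear_combination - v * h1 + t * (1 + x ^ 2 * y) * hv
  have hde : y * d = e := by
    refine mul_left_cancel₀ (mul_ne_zero (pow_ne_zero 2 hx) ht) ?_
    have he' : t * e = y * ((y * v - t ^ 2 * (1 + y) * (q + y * b)) ^ 2
        - (y * v - t ^ 2 * (1 + y) * (q + y * b))) + t ^ 2 * (1 - y) ^ 2 + y ^ 2 * v ^ 2 := by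
      linear_combination t * he + (-y ^ 2 * v + 2 * t ^ 2 * y ^ 2 * (q + y * b)) * hv
    obtain ⟨J, hJ'⟩ : ∃ J, J = y * v - t ^ 2 * (1 + y) * (q + y * b) := ⟨_, rfl⟩
    rw [← hJ'] at he' hJ
    have hd2 : x ^ 2 * t * d = (t + t ^ 2 * x ^ 2 * a) ^ 2 - x * (t + t ^ 2 * x ^ 2 * a)
        + t * x * (x ^ 2 + 1) - t ^ 2 * (x ^ 2 + 1) ^ 2 := by
      rw [← hd]; ring
    rw [hJ] at hd2
    linear_combination y * hd2 - x ^ 2 * he' - t * (x ^ 2 + 1) * h1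
      - (x * y * v + t * (1 + x ^ 2 * y)) * hw
  refine mul_left_cancel₀ (mul_ne_zero hx hy) ?_
  have hr : t + t ^ 2 * x ^ 2 * a + t ^ 2 * q * x
      = x * y * (v - t ^ 2 * (q + y * b) - t ^ 2 * b) := by
    linear_combination hJ
  linear_combination -(y * t) * hd' + y * d * hr - y * d0 * hJ
    + x * y * (v - t ^ 2 * (q + y * b) - t ^ 2 * b) * hde

/-- The cubic satisfied by `t + t ^ 2 * x * Q(x,0)`, in homogeneous form, where `c` is the common
value of the two sides of `curve_identity`. -/
lemma x_cubic {R : Type*} [CommRing R] {x t q a c d0 d1 h : R}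
    (hh : 2 * h = 1)
    (hd : 2 * t ^ 2 * a + t ^ 3 * x ^ 2 * a ^ 2 - t * x * a + x - t * x ^ 2 - 2 * t
      = d0 + x * d1)
    (hc : t * (d1 + (t * x * a + t * q) * (d0 + x * d1) - d0 * (t * x * a)) = c) :
    (t + t ^ 2 * (x * (x * a + q))) ^ 3
      - (1 + 2 * t ^ 2 * q) * (t + t ^ 2 * (x * (x * a + q))) ^ 2 * x
       + (h ^ 2 - (t * d0 - t ^ 4 * q ^ 2 - t ^ 2 * q)) * (t + t ^ 2 * (x * (x * a + q))) * x ^ 2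
      - (t * c - t ^ 3 * d0 * q) * x ^ 3
      = (t * (1 + x ^ 2) - h * x) ^ 2 * (t + t ^ 2 * (x * (x * a + q))) := by
  linear_combination t * x ^ 3 * hc +
    x ^ 2 * t * (t + t ^ 2 * (x * (x * a + q))) * hd
     + (t + t ^ 2 * (x * (x * a + q))) * t * x * (1 + x ^ 2) * hh

/-- The cubic satisfied by `y * (v - t ^ 2 * B)`, where `v = 1 / (1 + y)`, `B = Q(0,y) + b`, and
`c` is the common value of the two sides of `curve_identity`. -/
lemma y_cubic {R : Type*} [CommRing R] {y t v q b c d0 ε : R}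
    (hε : ε ^ 2 = 1) (hv : (1 + y) * v = 1)
    (hc : c = (v - t ^ 2 * (q + y * b) - t ^ 2 * b) * (t * (t ^ 2 * y * (1 + y) ^ 2
        * (q + y * b) ^ 2 + y * (1 - y) * (q + y * b) + (1 - y) ^ 2)) -
      d0 * (y * v - t ^ 2 * (1 + y) * (q + y * b))) :
    (y * (v - t ^ 2 * (q + y * b + b))) ^ 3
      - (1 + 2 * t ^ 2 * q) * (y * (v - t ^ 2 * (q + y * b + b))) ^ 2
       + (2 * ε * t - 4 * t ^ 2 - (t * d0 - t ^ 4 * q ^ 2 - t ^ 2 * q))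
        * (y * (v - t ^ 2 * (q + y * b + b)))
      - (t * c - t ^ 3 * d0 * q)
      = - ((t * (1 + y) - ε * (y * v)) ^ 2 * (v - t ^ 2 * (q + y * b + b))) := by
  obtain ⟨e, he⟩ : ∃ e, e = t * (t ^ 2 * y * (1 + y) ^ 2 * (q + y * b) ^ 2
         + y * (1 - y) * (q + y * b) + (1 - y) ^ 2) := ⟨_, rfl⟩
  rw [← he] at hc
  have he' : t * e = y * ((y * v - t ^ 2 * (1 + y) * (q + y * b)) ^ 2
        - (y * v - t ^ 2 * (1 + y) * (q + y * b))) + t ^ 2 * (1 - y) ^ 2 + y ^ 2 * v ^ 2 := by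
      linear_combination t * he + (-y ^ 2 * v + 2 * t ^ 2 * y ^ 2 * (q + y * b)) * hv
  linear_combination (-t) * hc - (v - t ^ 2 * (q + y * b + b)) * he'
    + (v - t ^ 2 * (q + y * b + b)) * y ^ 2 * v ^ 2 * hε
    - 2 * (v - t ^ 2 * (q + y * b + b)) * t * ε * y * hv

instance : IsDomain Ser := NoZeroDivisors.to_isDomain _

/-- The generating function of excursions, as a series in `x, y, t`. -/
def q : Ser := kill 0 (kill 1 Q)

lemma kill_comm (i j : Fin 3) (F : Ser) : kill i (kill j F) = kill j (kill i F) := by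
  ext m
  simp only [coeff_kill]
  split_ifs <;> rfl

@[simp] lemma kill0_q : kill 0 q = q := free_kill 0 _

@[simp] lemma kill1_q : kill 1 q = q := (free_kill 1 Q).kill 0

@[simp] lemma kill0_v : kill 0 v = v := by
  have h := congrArg (kill 0) one_add_y_mul_v
  simp only [map_mul, map_add, map_one, kill0_y] at h
  have h0 : (1 + y : Ser) ≠ 0 := left_ne_zero_of_mul_eq_one one_add_y_mul_v
  exact mul_left_cancel₀ h0 (h.trans one_add_y_mul_v.symm)

/-- For suitable series `β` and `l` in `t` alone, the cubic
`s ^ 3 - (1 + 2 * t ^ 2 * q) * s ^ 2 + (e - β) * s - l` takes, for `e = h ^ 2 = 1 / 4` at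
`s = (t + t ^ 2 * x * A) / x` with `A = Q(x,0)`, and for `e = ±2 * t - 4 * t ^ 2` at
`s = y * (v - t ^ 2 * B)`, a value that is a square times another series. -/
theorem cubics : ∃ A B β l : Ser, Free 0 β ∧ Free 1 β ∧ Free 0 l ∧ Free 1 l ∧
    (∀ h : Ser, 2 * h = 1 →
      (t + t ^ 2 * (x * A)) ^ 3 - (1 + 2 * t ^ 2 * q) * (t + t ^ 2 * (x * A)) ^ 2 * x
        + (h ^ 2 - β) * (t + t ^ 2 * (x * A)) * x ^ 2 - l * x ^ 3
        = (t * (1 + x ^ 2) - h * x) ^ 2 * (t + t ^ 2 * (x * A))) ∧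
    (∀ ε : Ser, ε ^ 2 = 1 →
      (y * (v - t ^ 2 * B)) ^ 3 - (1 + 2 * t ^ 2 * q) * (y * (v - t ^ 2 * B)) ^ 2
        + (2 * ε * t - 4 * t ^ 2 - β) * (y * (v - t ^ 2 * B)) - l
        = - ((t * (1 + y) - ε * (y * v)) ^ 2 * (v - t ^ 2 * B))) := by
  obtain ⟨a, ha⟩ := X_dvd_sub_kill 0 (kill 1 Q)
  obtain ⟨b, hb⟩ := X_dvd_sub_kill 1 (kill 0 Q)
  rw [kill_comm 1 0] at hb
  have hQ1 : kill 1 Q = q + x * a := by rw [← sub_add_cancel (kill 1 Q), ha]; exact add_comm _ _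
  have hQ0 : kill 0 Q = q + y * b := by rw [← sub_add_cancel (kill 0 Q), hb]; exact add_comm _ _
  have ha1 : kill 1 a = a := free_of_X_mul (j := 0) (by decide) (by
    rw [← ha, Free, map_sub]; exact congrArg₂ _ (free_kill 1 Q) kill1_q)
  have hb0 : kill 0 b = b := free_of_X_mul (j := 1) (by decide) (by
    rw [← hb, Free, map_sub]; exact congrArg₂ _ (free_kill 0 Q) kill0_q)
  obtain ⟨d, hd⟩ : ∃ d, d = 2 * t ^ 2 * a + t ^ 3 * x ^ 2 * a ^ 2 - t * x * a + x
    - t * x ^ 2 - 2 * t := ⟨_, rfl⟩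
  have hd1 : kill 1 d = d := by
    simp [hd, ha1, map_ofNat (kill 1) 2]
  obtain ⟨d', hd'⟩ := X_dvd_sub_kill 0 d
  have hd0 : d = kill 0 d + x * d' := sub_eq_iff_eq_add'.1 hd'
  have h01 : kill 1 (kill 0 d) = kill 0 d := (show Free 1 d from hd1).kill 0
  have h00 : kill 0 (kill 0 d) = kill 0 d := free_kill 0 d
  have hd'1 : kill 1 d' = d' := free_of_X_mul (j := 0) (by decide) (by
    rw [← hd', Free, map_sub, hd1, h01])
  obtain ⟨d0, hd0'⟩ : ∃ d0, d0 = kill 0 d := ⟨_, rfl⟩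
  rw [← hd0'] at h01 h00 hd0
  have hdd := hd.symm.trans hd0
  obtain ⟨c, hc⟩ : ∃ c, c = t * (d' + (t * x * a + t * q) * (d0 + x * d') - d0 * (t * x * a)) :=
    ⟨_, rfl⟩
  obtain ⟨c', hc'⟩ : ∃ c', c' = (v - t ^ 2 * (q + y * b) - t ^ 2 * b)
    * (t * (t ^ 2 * y * (1 + y) ^ 2 * (q + y * b) ^ 2
        + y * (1 - y) * (q + y * b) + (1 - y) ^ 2)) -
      d0 * (y * v - t ^ 2 * (1 + y) * (q + y * b)) := ⟨_, rfl⟩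
  have hc1 : kill 1 c = c := by simp [hc, ha1, h01, hd'1]
  have hc0 : kill 0 c' = c' := by simp [hc', hb0, h00]
  -- The invariant lemma identifies the two sides of `curve_identity`.
  have hcc : c = c' := by
    refine eq_of_curve_eq hc1 hc0 ?_
    rw [hc, hc']
    have hcur := congrArg curve (show _ = _ + t * q from functional_equation)
    have hv := congrArg curve one_add_y_mul_v
    have hdd' := congrArg curve hdd
    rw [hQ1, hQ0] at hcur
    simp only [map_add, map_sub, map_mul, map_pow, map_one, map_ofNat, curve_x, curve_y, curve_t]
      at hcur hv hdd' ⊢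
    refine curve_identity x_ne_zero y_ne_zero tau_ne_zero hv tau_kernel ?_ hdd'
    linear_combination hcur + curve Q * tau_kernel
  refine ⟨q + x * a, q + y * b + b, t * d0 - t ^ 4 * q ^ 2 - t ^ 2 * q,
    t * c - t ^ 3 * d0 * q, ?_, ?_, ?_, ?_, fun h hh => ?_, fun ε hε => ?_⟩
  · simp [Free, h00]
  · simp [Free, h01]
  · rw [← hcc] at hc0; simp [Free, h00, hc0]
  · simp [Free, h01, hc1]
  · rw [add_comm q]; exact x_cubic hh hdd hc.symm
  · have hv := hcc.trans hc'
    exact y_cubic hε one_add_y_mul_v hv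

/-! ### Double roots of the cubic -/

/-- Let the homogeneous cubic `P(n, D) = n³ - a n² D + e n D² - l D³` be divisible by `x²` at
`(n0 + x n1, D0 + x D1)`, where `κ` and `ψ` specialize to `x = 0` and `κ` fixes `n0`, `D0` and the
coefficients. Then `n0 / D0`, specialized by `ψ`, is a double root of the cubic, unless the
derivative of `n / D` in `x` vanishes at `x = 0`. -/
lemma double_root {R S : Type*} [CommRing R] [IsDomain R] [CommRing S] [IsDomain S]
    (κ : R →+* R) (ψ : R →+* S) {x n0 n1 D0 D1 a e l W : R} (hx : x ≠ 0) (hκx : κ x = 0)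
    (hψx : ψ x = 0) (hn0 : κ n0 = n0) (hD0 : κ D0 = D0) (ha : κ a = a) (he : κ e = e)
    (hl : κ l = l)
    (h : (n0 + x * n1) ^ 3 - a * (n0 + x * n1) ^ 2 * (D0 + x * D1)
      + e * (n0 + x * n1) * (D0 + x * D1) ^ 2 - l * (D0 + x * D1) ^ 3 = x ^ 2 * W)
    (hne : ψ n1 * ψ D0 - ψ n0 * ψ D1 ≠ 0) :
    ψ n0 ^ 3 - ψ a * ψ n0 ^ 2 * ψ D0 + ψ e * ψ n0 * ψ D0 ^ 2 - ψ l * ψ D0 ^ 3 = 0 ∧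
    3 * ψ n0 ^ 2 - 2 * ψ a * ψ n0 * ψ D0 + ψ e * ψ D0 ^ 2 = 0 := by
  have h0 : n0 ^ 3 - a * n0 ^ 2 * D0 + e * n0 * D0 ^ 2 - l * D0 ^ 3 = 0 := by
    simpa [hκx, hn0, hD0, ha, he, hl] using congrArg κ h
  have h1 : (3 * n0 ^ 2 - 2 * a * n0 * D0 + e * D0 ^ 2) * n1
      + (-a * n0 ^ 2 + 2 * e * n0 * D0 - 3 * l * D0 ^ 2) * D1
      + x * (3 * n0 * n1 ^ 2 - a * (2 * n0 * n1 * D1 + n1 ^ 2 * D0)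
        + e * (n0 * D1 ^ 2 + 2 * n1 * D0 * D1) - 3 * l * D0 * D1 ^ 2
        + x * (n1 ^ 3 - a * n1 ^ 2 * D1 + e * n1 * D1 ^ 2 - l * D1 ^ 3) - W) = 0 := by
    refine mul_left_cancel₀ hx ?_
    linear_combination h - h0
  have h0' := congrArg ψ h0
  have h1' := congrArg ψ h1
  simp only [map_add, map_sub, map_mul, map_pow, map_neg, map_ofNat, map_zero, hψx, zero_mul,
    add_zero] at h0' h1'
  refine ⟨h0', mul_right_cancel₀ hne ?_⟩
  -- Euler's identity `n * ∂P/∂n + D * ∂P/∂D = 3 * P` eliminates `∂P/∂D`.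
  linear_combination ψ D0 * h1' + h0' * (-3 * ψ D1)

/-! ### Evaluation at the critical points -/

/-- The restriction of a series to `x = y = 0`, as a series in one variable. -/
def atOrigin : Ser →ₐ[ℚ] PowerSeries ℚ := ev ![0, 0, PowerSeries.X] fun i => by
  fin_cases i
  · simp
  · simp
  · exact PowerSeries.constantCoeff_X

@[simp] lemma atOrigin_x : atOrigin x = 0 := ev_x _
@[simp] lemma atOrigin_y : atOrigin y = 0 := ev_y _
@[simp] lemma atOrigin_t : atOrigin t = PowerSeries.X := ev_t _

lemma constantCoeff_diag (F : Ser) : PowerSeries.constantCoeff (atOrigin F) = constantCoeff F :=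
  constantCoeff_ev _ _

/-- Series in `t` alone are not changed by a substitution that fixes `t`. -/
lemma ev_fixed {a : Fin 3 → Ser} (ha : ∀ i, constantCoeff (a i) = 0) (ht : a 2 = t) {F : Ser}
    (h0 : Free 0 F) (h1 : Free 1 F) : ev a ha F = F := by
  have h : ∀ i, constantCoeff (![x, a 1, t] i) = 0 := fun i => by
    fin_cases i
    · simp
    · exact ha 1
    · simp
  rw [ev_congr ha h h0 fun j hj => by fin_cases j <;> simp_all,
    ev_congr h (b := X) (fun i => constantCoeff_X i) h1 fun j hj => by
      fin_cases j <;> simp_all [x, t], ev_self]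

lemma exists_catalan (s : Ser) (hs : constantCoeff s = 0) : ∃ c : Ser, c = 1 + s * c ^ 2 := by
  have hs' : PowerSeries.HasSubst s := PowerSeries.HasSubst.of_constantCoeff_zero hs
  have h := congrArg (PowerSeries.map (Nat.castRingHom ℚ)) PowerSeries.catalanSeries_sq_mul_X_add_one
  have h2 := congrArg (PowerSeries.substAlgHom hs') h
  simp only [map_add, map_mul, map_pow, map_one, PowerSeries.map_X, PowerSeries.substAlgHom_X] at h2
  exact ⟨_, h2.symm.trans (by ring)⟩

/-- For `D ≠ 0`, the fraction `N / D` is a root of multiplicity at least two of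
`T ^ 3 - a * T ^ 2 + (e - β) * T - l`. The condition is stated without denominators. -/
def HasDoubleRoot (a β l e : PowerSeries ℚ) (N D : PowerSeries ℚ) : Prop :=
  N ^ 3 - a * N ^ 2 * D + (e - β) * N * D ^ 2 - l * D ^ 3 = 0 ∧
    3 * N ^ 2 - 2 * a * N * D + (e - β) * D ^ 2 = 0

/-- The double root for `e = 1 / 4`. It is found at the series `D` with `D = 2 * t * (1 + D ^ 2)`,
where the squared factor `t * (1 + x ^ 2) - x / 2` of the cubic vanishes. -/
lemma double_root_x {A β l h : Ser} (hβ0 : Free 0 β) (hβ1 : Free 1 β) (hl0 : Free 0 l)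
    (hl1 : Free 1 l) (hh0 : Free 0 h) (hh1 : Free 1 h) (hh : 2 * h = 1)
    (H : (t + t ^ 2 * (x * A)) ^ 3 - (1 + 2 * t ^ 2 * q) * (t + t ^ 2 * (x * A)) ^ 2 * x
        + (h ^ 2 - β) * (t + t ^ 2 * (x * A)) * x ^ 2 - l * x ^ 3
        = (t * (1 + x ^ 2) - h * x) ^ 2 * (t + t ^ 2 * (x * A))) :
    ∃ N D, D ≠ 0 ∧ HasDoubleRoot (1 + 2 * PowerSeries.X ^ 2 * atOrigin q) (atOrigin β) (atOrigin l)
      (atOrigin h ^ 2) N D := by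
  obtain ⟨c, hc⟩ := exists_catalan (4 * t ^ 2) (by simp)
  obtain ⟨D, hD⟩ : ∃ D, D = kill 0 (2 * t * c) := ⟨_, rfl⟩
  have hD0 : kill 0 D = D := by rw [hD]; exact free_kill 0 _
  have hDt : D = 2 * t * (1 + D ^ 2) := by
    have h2 : (2 * t * c) = 2 * t * (1 + (2 * t * c) ^ 2) := by linear_combination 2 * t * hc
    have := congrArg (kill 0) h2
    simp only [map_mul (kill 0) (2 * t) (1 + _), map_add, map_pow, map_one] at this
    rw [← hD] at this
    simpa [map_ofNat (kill 0) 2] using this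
  have hDc : constantCoeff D = 0 := by rw [hDt]; simp
  -- Substituting `x ↦ D + x` makes `x` a local parameter at the critical point.
  have ha : ∀ i, constantCoeff (![D + x, 0, t] i) = 0 := fun i => by
    fin_cases i <;> simp [hDc]
  have H' := congrArg (ev _ ha) H
  simp only [map_add, map_sub, map_mul, map_pow, map_one, map_ofNat, ev_x, ev_t,
    ev_fixed ha rfl (F := q) kill0_q kill1_q, ev_fixed ha rfl hβ0 hβ1, ev_fixed ha rfl hl0 hl1,
    ev_fixed ha rfl hh0 hh1] at H'
  obtain ⟨m, hm⟩ : ∃ m, m = (D + x) * ev _ ha A := ⟨_, rfl⟩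
  change (t + t ^ 2 * ((D + x) * ev _ ha A)) ^ 3 - (1 + 2 * t ^ 2 * q)
    * (t + t ^ 2 * ((D + x) * ev _ ha A)) ^ 2 * (D + x)
    + (h ^ 2 - β) * (t + t ^ 2 * ((D + x) * ev _ ha A)) * (D + x) ^ 2 - l * (D + x) ^ 3
    = (t * (1 + (D + x) ^ 2) - h * (D + x)) ^ 2 * (t + t ^ 2 * ((D + x) * ev _ ha A)) at H'
  rw [← hm] at H'
  obtain ⟨m1, hm1⟩ := X_dvd_sub_kill 0 m
  have hm1' : m = kill 0 m + x * m1 := sub_eq_iff_eq_add'.1 hm1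
  have key := double_root (kill 0 : Ser →+* Ser) (atOrigin : Ser →+* PowerSeries ℚ)
    (x := x) (n0 := t + t ^ 2 * kill 0 m) (n1 := t ^ 2 * m1) (D0 := D) (D1 := 1)
    (a := 1 + 2 * t ^ 2 * q) (e := h ^ 2 - β) (l := l)
    (W := (2 * t * D + t * x - h) ^ 2 * (t + t ^ 2 * m))
    x_ne_zero (by simp) (by simp) (by simp [show kill 0 (kill 0 m) = kill 0 m from free_kill 0 m])
    (by simpa using hD0) (by simp [map_ofNat (kill 0) 2])
    (by simp [show kill 0 h = h from hh0, show kill 0 β = β from hβ0]) hl0 (by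
      rw [show t + t ^ 2 * kill 0 m + x * (t ^ 2 * m1) = t + t ^ 2 * m by
        linear_combination -t ^ 2 * hm1', mul_one, H']
      have : t * (1 + (D + x) ^ 2) - h * (D + x) = x * (2 * t * D + t * x - h) := by
        linear_combination (-h) * hDt - t * (1 + D ^ 2) * hh
      rw [this]; ring) (by
      simp only [RingHom.coe_coe, map_add, map_mul, map_pow, map_one, atOrigin_t]
      have : PowerSeries.X ^ 2 * atOrigin m1 * atOrigin D - (PowerSeries.X + PowerSeries.X ^ 2
          * atOrigin (kill 0 m)) * 1 = PowerSeries.X * (PowerSeries.X * (atOrigin m1 * atOrigin D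
          - atOrigin (kill 0 m)) - 1) := by ring
      rw [this]
      refine mul_ne_zero PowerSeries.X_ne_zero fun h0 => ?_
      simpa using congrArg PowerSeries.constantCoeff h0)
  refine ⟨atOrigin (t + t ^ 2 * kill 0 m), atOrigin D, fun h0 => ?_, ?_⟩
  · have := congrArg atOrigin hDt
    rw [map_mul, map_add, map_pow, h0] at this
    have h2 := congrArg atOrigin hh
    rw [map_mul, map_one] at h2
    have h2' : atOrigin 2 ≠ 0 := left_ne_zero_of_mul_eq_one h2
    simp [h2', PowerSeries.X_ne_zero] at this
  · simp only [RingHom.coe_coe] at key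
    rw [show atOrigin (1 + 2 * t ^ 2 * q) = 1 + 2 * PowerSeries.X ^ 2 * atOrigin q by
      simp [map_ofNat atOrigin 2], map_sub, map_pow atOrigin h] at key
    exact key

/-- The double roots for `e = 2 * ε * t - 4 * t ^ 2`, where `ε = ±1`. They are found at the series
`Y` with `Y = ε * t * (1 + Y) ^ 2`, where the squared factor `t * (1 + y) - ε * y * v` of the cubic
vanishes. -/
lemma double_root_y {B β l ε : Ser} (hβ0 : Free 0 β) (hβ1 : Free 1 β) (hl0 : Free 0 l)
    (hl1 : Free 1 l) (hε0 : Free 0 ε) (hε1 : Free 1 ε) (hε : ε ^ 2 = 1)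
    (H : (y * (v - t ^ 2 * B)) ^ 3 - (1 + 2 * t ^ 2 * q) * (y * (v - t ^ 2 * B)) ^ 2
        + (2 * ε * t - 4 * t ^ 2 - β) * (y * (v - t ^ 2 * B)) - l
        = - ((t * (1 + y) - ε * (y * v)) ^ 2 * (v - t ^ 2 * B))) :
    ∃ N, HasDoubleRoot (1 + 2 * PowerSeries.X ^ 2 * atOrigin q) (atOrigin β) (atOrigin l)
      (2 * atOrigin ε * PowerSeries.X - 4 * PowerSeries.X ^ 2) N 1 := by
  obtain ⟨c, hc⟩ := exists_catalan (ε * t) (by simp)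
  obtain ⟨Y, hY⟩ : ∃ Y, Y = kill 0 (c - 1) := ⟨_, rfl⟩
  have hY0 : kill 0 Y = Y := by rw [hY]; exact free_kill 0 _
  have hYt : Y = ε * t * (1 + Y) ^ 2 := by
    have h2 : c - 1 = ε * t * (1 + (c - 1)) ^ 2 := by linear_combination hc
    have := congrArg (kill 0) h2
    rw [map_mul, map_mul, map_pow, map_add, ← hY, map_one, hε0, kill0_t] at this
    exact this
  have hYc : constantCoeff Y = 0 := by rw [hYt]; simp
  -- Substituting `y ↦ Y + x` makes `x` a local parameter at the critical point.
  have ha : ∀ i, constantCoeff (![0, Y + x, t] i) = 0 := fun i => by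
    fin_cases i <;> simp [hYc]
  have H' := congrArg (ev _ ha) H
  have hv := congrArg (ev _ ha) one_add_y_mul_v
  have hvc := constantCoeff_ev ha v
  obtain ⟨w, hw⟩ : ∃ w, w = ev _ ha v := ⟨_, rfl⟩
  obtain ⟨σ, hσ⟩ : ∃ σ, σ = w - t ^ 2 * ev _ ha B := ⟨_, rfl⟩
  simp only [map_add, map_sub, map_mul, map_pow, map_one, map_ofNat, map_neg, ev_y, ev_t,
    ev_fixed ha rfl (F := q) kill0_q kill1_q, ev_fixed ha rfl hβ0 hβ1, ev_fixed ha rfl hl0 hl1,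
    ev_fixed ha rfl hε0 hε1, ← hw] at H' hv hvc
  change ((Y + x) * (w - t ^ 2 * ev _ ha B)) ^ 3 - (1 + 2 * t ^ 2 * q)
    * ((Y + x) * (w - t ^ 2 * ev _ ha B)) ^ 2
    + (2 * ε * t - 4 * t ^ 2 - β) * ((Y + x) * (w - t ^ 2 * ev _ ha B)) - l
    = - ((t * (1 + (Y + x)) - ε * ((Y + x) * w)) ^ 2 * (w - t ^ 2 * ev _ ha B)) at H'
  change (1 + (Y + x)) * w = 1 at hv
  rw [← hσ] at H'
  obtain ⟨σ1, hσ1⟩ := X_dvd_sub_kill 0 σ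
  have hσ1' : σ = kill 0 σ + x * σ1 := sub_eq_iff_eq_add'.1 hσ1
  have hσc : constantCoeff (kill 0 σ) = 1 := by
    rw [kill, constantCoeff_ev, hσ]
    simp [hvc]
  have key := double_root (kill 0 : Ser →+* Ser) (atOrigin : Ser →+* PowerSeries ℚ)
    (x := x) (n0 := Y * kill 0 σ) (n1 := kill 0 σ + (Y + x) * σ1) (D0 := 1) (D1 := 0)
    (a := 1 + 2 * t ^ 2 * q) (e := 2 * ε * t - 4 * t ^ 2 - β) (l := l)
    (W := - ((w * (2 * t * (1 + Y) + t * x - ε)) ^ 2 * σ))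
    x_ne_zero (by simp) (by simp)
    (by simp [show kill 0 (kill 0 σ) = kill 0 σ from free_kill 0 σ, hY0])
    (by simp) (by simp [map_ofNat (kill 0) 2])
    (by simp [show kill 0 ε = ε from hε0, show kill 0 β = β from hβ0, map_ofNat (kill 0) 2,
      map_ofNat (kill 0) 4]) hl0 (by
      rw [show Y * kill 0 σ + x * (kill 0 σ + (Y + x) * σ1) = (Y + x) * σ by
        linear_combination -(Y + x) * hσ1']
      have : t * (1 + (Y + x)) - ε * ((Y + x) * w)
          = x * (w * (2 * t * (1 + Y) + t * x - ε)) := by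
        linear_combination (-t * (1 + Y + x)) * hv - ε * w * hYt - w * t * (1 + Y) ^ 2 * hε
      rw [this] at H'
      linear_combination H') (by
      intro h0
      have := congrArg PowerSeries.constantCoeff h0
      simp [constantCoeff_diag, hσc, hYc] at this)
  refine ⟨atOrigin (Y * kill 0 σ), ?_⟩
  simp only [RingHom.coe_coe] at key
  rw [show atOrigin (1 + 2 * t ^ 2 * q) = 1 + 2 * PowerSeries.X ^ 2 * atOrigin q by
      simp [map_ofNat atOrigin 2], map_sub, show atOrigin (2 * ε * t - 4 * t ^ 2)
      = 2 * atOrigin ε * PowerSeries.X - 4 * PowerSeries.X ^ 2 by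
      simp [map_ofNat atOrigin 2, map_ofNat atOrigin 4], map_one] at key
  exact key

/-! ### Algebraicity -/

/-- A double root `s` for the linear coefficient `e - β` is a root of `2 s³ - a s² + l`, which does
not involve `e`. These are the relations between its three roots. -/
lemma vieta {K : Type*} [Field K] [CharZero K] {a β l e1 e2 e3 s1 s2 s3 : K}
    (h1 : s1 ^ 3 - a * s1 ^ 2 + (e1 - β) * s1 - l = 0)
    (h1' : 3 * s1 ^ 2 - 2 * a * s1 + (e1 - β) = 0)
    (h2 : s2 ^ 3 - a * s2 ^ 2 + (e2 - β) * s2 - l = 0)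
    (h2' : 3 * s2 ^ 2 - 2 * a * s2 + (e2 - β) = 0)
    (h3 : s3 ^ 3 - a * s3 ^ 2 + (e3 - β) * s3 - l = 0)
    (h3' : 3 * s3 ^ 2 - 2 * a * s3 + (e3 - β) = 0)
    (h12 : s1 ≠ s2) (h13 : s1 ≠ s3) (h23 : s2 ≠ s3) :
    a = 2 * (s1 + s2 + s3) ∧ s1 * s2 + s1 * s3 + s2 * s3 = 0 := by
  have k12 : 2 * (s1 ^ 2 + s1 * s2 + s2 ^ 2) = a * (s1 + s2) := by
    refine mul_left_cancel₀ (sub_ne_zero.2 h12) ?_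
    linear_combination s1 * h1' - h1 - (s2 * h2' - h2)
  have k13 : 2 * (s1 ^ 2 + s1 * s3 + s3 ^ 2) = a * (s1 + s3) := by
    refine mul_left_cancel₀ (sub_ne_zero.2 h13) ?_
    linear_combination s1 * h1' - h1 - (s3 * h3' - h3)
  have ha : a = 2 * (s1 + s2 + s3) := by
    refine mul_left_cancel₀ (sub_ne_zero.2 h23) ?_
    linear_combination k13 - k12
  refine ⟨ha, mul_left_cancel₀ (two_ne_zero (α := K)) ?_⟩
  linear_combination -k12 - (s1 + s2) * ha

/-- If the cubic `T³ - a T² + (e - β) T - l` has a double root for three distinct algebraic values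
of `e`, then `a` is algebraic. By `vieta` everything is expressed by `s2` and `m = s1 / s2`, and the
differences of the `e`s give an equation for `m`, then one for `s2`. -/
lemma isAlgebraic_of_double_roots {R K : Type*} [CommRing R] [IsDomain R] [CharZero R] [Field K]
    [Algebra R K] [FaithfulSMul R K] {a β l s1 s2 s3 : K} {e1 e2 e3 : R}
    (h1 : s1 ^ 3 - a * s1 ^ 2 + (algebraMap R K e1 - β) * s1 - l = 0)
    (h1' : 3 * s1 ^ 2 - 2 * a * s1 + (algebraMap R K e1 - β) = 0)
    (h2 : s2 ^ 3 - a * s2 ^ 2 + (algebraMap R K e2 - β) * s2 - l = 0)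
    (h2' : 3 * s2 ^ 2 - 2 * a * s2 + (algebraMap R K e2 - β) = 0)
    (h3 : s3 ^ 3 - a * s3 ^ 2 + (algebraMap R K e3 - β) * s3 - l = 0)
    (h3' : 3 * s3 ^ 2 - 2 * a * s3 + (algebraMap R K e3 - β) = 0)
    (h12 : e1 ≠ e2) (h13 : e1 ≠ e3) (h23 : e2 ≠ e3) : IsAlgebraic R a := by
  have hinj := FaithfulSMul.algebraMap_injective R K
  have : CharZero K := charZero_of_injective_algebraMap hinj
  have g12 : s1 ≠ s2 := by
    rintro rfl
    exact h12 (hinj (by linear_combination h1' - h2'))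
  have g13 : s1 ≠ s3 := by
    rintro rfl
    exact h13 (hinj (by linear_combination h1' - h3'))
  have g23 : s2 ≠ s3 := by
    rintro rfl
    exact h23 (hinj (by linear_combination h2' - h3'))
  obtain ⟨ha, hs⟩ := vieta h1 h1' h2 h2' h3 h3' g12 g13 g23
  have hs2 : s2 ≠ 0 := by
    rintro rfl
    rcases mul_eq_zero.1 (show s1 * s3 = 0 by linear_combination hs) with h | h
    · exact g12 h
    · exact g23 h.symm
  have hs12 : s1 + s2 ≠ 0 := fun h => by
    have : s2 ^ 2 = 0 := by linear_combination (s3 + s2) * h - hs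
    exact hs2 (pow_eq_zero_iff two_ne_zero |>.1 this)
  obtain ⟨m, hm⟩ : ∃ m, s1 = m * s2 := ⟨s1 / s2, by field_simp⟩
  have hm1 : 1 + m ≠ 0 := fun h => hs12 (by rw [hm]; linear_combination s2 * h)
  have hs3 : s3 = -(m * (1 + m)⁻¹ * s2) := by
    field_simp
    refine mul_left_cancel₀ hs2 ?_
    rw [hm] at hs
    linear_combination hs
  have d13 : (algebraMap R K e1 - algebraMap R K e3) * (1 + m) ^ 2
      = s2 ^ 2 * (m * (m + 2) ^ 3) := by
    have : algebraMap R K e1 - algebraMap R K e3 = (s1 - s3) * (2 * a - 3 * (s1 + s3)) := by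
      linear_combination h1' - h3'
    rw [this, ha, hs3, hm]
    field_simp
    ring
  have d23 : (algebraMap R K e2 - algebraMap R K e3) * (1 + m) ^ 2
      = s2 ^ 2 * (1 + 2 * m) ^ 3 := by
    have : algebraMap R K e2 - algebraMap R K e3 = (s2 - s3) * (2 * a - 3 * (s2 + s3)) := by
      linear_combination h2' - h3'
    rw [this, ha, hs3, hm]
    field_simp
    ring
  have hme : (algebraMap R K e2 - algebraMap R K e3) * (m * (m + 2) ^ 3)
      = (algebraMap R K e1 - algebraMap R K e3) * (1 + 2 * m) ^ 3 := by
    refine mul_left_cancel₀ (pow_ne_zero 2 hs2) ?_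
    linear_combination -(algebraMap R K e2 - algebraMap R K e3) * d13
      + (algebraMap R K e1 - algebraMap R K e3) * d23
  have halg : IsAlgebraic R m := by
    refine ⟨Polynomial.C (e2 - e3) * (Polynomial.X * (Polynomial.X + 2) ^ 3)
      - Polynomial.C (e1 - e3) * (1 + 2 * Polynomial.X) ^ 3, fun h0 => ?_, ?_⟩
    -- At `-2` the polynomial takes the value `27 * (e1 - e3)`.
    · have := congrArg (Polynomial.eval (-2)) h0
      simp [sub_eq_zero, h13] at this
      norm_num at this
    · simp [map_ofNat (Polynomial.aeval (R := R) m) 2, hme]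
  have hn (n : ℕ) : IsAlgebraic R (n : K) := isAlgebraic_natCast n
  have hone : IsAlgebraic R (1 : K) := isAlgebraic_one
  have htwo : IsAlgebraic R (2 : K) := hn 2
  have h12m : (1 + 2 * m) ≠ 0 := fun h => by
    rw [h] at d23
    exact mul_ne_zero (sub_ne_zero.2 (hinj.ne h23)) (pow_ne_zero 2 hm1) (by rw [d23]; ring)
  have hs2alg : IsAlgebraic R s2 := by
    refine IsAlgebraic.of_pow two_pos ?_
    rw [show s2 ^ 2 = algebraMap R K (e2 - e3) * (1 + m) ^ 2 * ((1 + 2 * m) ^ 3)⁻¹ by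
      rw [map_sub, d23]; field_simp]
    exact ((isAlgebraic_algebraMap _).mul ((hone.add halg).pow 2)).mul
      ((hone.add (htwo.mul halg)).pow 3).inv
  rw [ha, hs3, hm]
  exact htwo.mul (((halg.mul hs2alg).add hs2alg).add
    ((halg.mul (hone.add halg).inv).mul hs2alg).neg)

lemma coeff_diag (n : ℕ) (F : Ser) : PowerSeries.coeff n (atOrigin F) = cf 0 0 n F := by
  induction n generalizing F with
  | zero =>
    rw [PowerSeries.coeff_zero_eq_constantCoeff_apply, constantCoeff_diag, cf,
      ← coeff_zero_eq_constantCoeff_apply]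
    congr 2
    ext k; fin_cases k <;> simp
  | succ n ih =>
    obtain ⟨F', hF'⟩ := X_dvd_sub_kill 2 F
    have h1 : F = kill 2 F + t * F' := sub_eq_iff_eq_add'.1 hF'
    have h2 : atOrigin (kill 2 F) = PowerSeries.C (constantCoeff F) := by
      refine Eq.trans ?_ (ev_zero F)
      rw [kill, atOrigin, ev_ev]
      congr 2
      ext1 i
      change atOrigin _ = _
      fin_cases i
      · exact atOrigin_x
      · exact atOrigin_y
      · exact map_zero _
    have h3 := congrArg (cf 0 0 (n + 1)) h1
    rw [map_add, cf_t_succ, ← ih, cf, coeff_kill, if_neg (by simp), zero_add] at h3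
    rw [h1, map_add, map_mul, h2, atOrigin_t, map_add, PowerSeries.coeff_succ_X_mul, ← h1]
    rw [PowerSeries.coeff_C, if_neg (by simp), zero_add]
    exact h3.symm

lemma atOrigin_q : atOrigin q = GesselGF00 := by
  ext n
  rw [coeff_diag, q, cf_kill0, cf_kill1]
  simp [GesselGF00]

lemma free_algebraMap (i : Fin 3) (c : ℚ) : Free i (algebraMap ℚ Ser c) := (kill i).commutes c

/-- The double root as an element of a field that contains the power series. -/
lemma HasDoubleRoot.div {K : Type*} [Field K] [Algebra (PowerSeries ℚ) K]
    [FaithfulSMul (PowerSeries ℚ) K] {a β l e N D : PowerSeries ℚ}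
    (h : HasDoubleRoot a β l e N D) (hD : D ≠ 0) : ∃ s : K,
    s ^ 3 - algebraMap _ K a * s ^ 2 + (algebraMap _ K e - algebraMap _ K β) * s
      - algebraMap _ K l = 0 ∧
    3 * s ^ 2 - 2 * algebraMap _ K a * s + (algebraMap _ K e - algebraMap _ K β) = 0 := by
  have hD' : algebraMap _ K D ≠ 0 := by
    simpa using (FaithfulSMul.algebraMap_injective (PowerSeries ℚ) K).ne hD
  have h1 := congrArg (algebraMap _ K) h.1
  have h2 := congrArg (algebraMap _ K) h.2
  simp only [map_add, map_sub, map_mul, map_pow, map_ofNat, map_zero] at h1 h2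
  refine ⟨algebraMap _ K N / algebraMap _ K D, ?_, ?_⟩
  · field_simp
    linear_combination h1
  · field_simp
    linear_combination h2

theorem isAlgebraic_gesselGF00 : IsAlgebraic (Polynomial ℚ) GesselGF00 := by
  let K := FractionRing (PowerSeries ℚ)
  have hcoe (p : Polynomial ℚ) : algebraMap (Polynomial ℚ) (PowerSeries ℚ) p = p := by
    rw [PowerSeries.algebraMap_apply']; simp
  have hinj : Function.Injective (algebraMap (Polynomial ℚ) (PowerSeries ℚ)) := fun p r h => by
    rwa [hcoe, hcoe, Polynomial.coe_inj] at h
  have hinjK : Function.Injective (algebraMap (PowerSeries ℚ) K) :=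
    IsFractionRing.injective _ _
  have : FaithfulSMul (Polynomial ℚ) K := (faithfulSMul_iff_algebraMap_injective _ _).2 (by
    rw [IsScalarTower.algebraMap_eq _ (PowerSeries ℚ) K]
    exact hinjK.comp hinj)
  obtain ⟨A, B, β, l, hβ0, hβ1, hl0, hl1, hX, hY⟩ := cubics
  have hY' (ε : ℚ) (hε : ε ^ 2 = 1) := double_root_y (ε := algebraMap ℚ Ser ε) hβ0 hβ1 hl0 hl1
    (free_algebraMap 0 ε) (free_algebraMap 1 ε) (by rw [← map_pow, hε, map_one])
    (hY _ (by rw [← map_pow, hε, map_one]))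
  have hhalf : 2 * algebraMap ℚ Ser (1 / 2) = 1 := by
    rw [← map_ofNat (algebraMap ℚ Ser) 2, ← map_mul]; norm_num
  obtain ⟨N1, h1⟩ := hY' 1 (by norm_num)
  obtain ⟨N2, h2⟩ := hY' (-1) (by norm_num)
  obtain ⟨N3, D3, hD3, h3⟩ := double_root_x hβ0 hβ1 hl0 hl1 (free_algebraMap 0 _)
    (free_algebraMap 1 _) hhalf (hX _ hhalf)
  have he (ε : ℚ) : 2 * algebraMap ℚ (PowerSeries ℚ) ε * PowerSeries.X - 4 * PowerSeries.X ^ 2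
      = algebraMap (Polynomial ℚ) _
        (Polynomial.C (2 * ε) * Polynomial.X - 4 * Polynomial.X ^ 2) := by
    have h4 : ((4 : Polynomial ℚ) : PowerSeries ℚ) = 4 :=
      map_ofNat Polynomial.coeToPowerSeries.ringHom 4
    simp [hcoe, h4, map_ofNat (PowerSeries.C (R := ℚ)) 2]
  have he' : algebraMap ℚ (PowerSeries ℚ) (1 / 2) ^ 2
      = algebraMap (Polynomial ℚ) _ (Polynomial.C (1 / 4)) := by
    rw [← map_pow, hcoe, Polynomial.coe_C]
    norm_num [PowerSeries.algebraMap_apply]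
  rw [atOrigin_q, AlgHom.commutes] at h1 h2 h3
  rw [he] at h1 h2
  rw [he'] at h3
  obtain ⟨s1, h1, h1'⟩ := h1.div (K := K) one_ne_zero
  obtain ⟨s2, h2, h2'⟩ := h2.div (K := K) one_ne_zero
  obtain ⟨s3, h3, h3'⟩ := h3.div (K := K) hD3
  rw [← IsScalarTower.algebraMap_apply] at h1 h1' h2 h2' h3 h3'
  have hd (ε : ℚ) : Polynomial.C (2 * ε) * Polynomial.X - 4 * Polynomial.X ^ 2
      ≠ Polynomial.C (1 / 4) := fun h => by
    have := congrArg (Polynomial.coeff · 2) h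
    rw [← Polynomial.C_ofNat] at this
    simp at this
  have key := isAlgebraic_of_double_roots h1 h1' h2 h2' h3 h3' (fun h => by
    have := congrArg (Polynomial.eval 1) h
    norm_num at this) (hd _) (hd _)
  rw [map_add, map_one, map_mul, map_mul, map_pow, map_ofNat] at key
  have hX' : IsAlgebraic (Polynomial ℚ) (2 * algebraMap (PowerSeries ℚ) K PowerSeries.X ^ 2) := by
    rw [← Polynomial.coe_X, ← hcoe, ← IsScalarTower.algebraMap_apply]
    exact (isAlgebraic_natCast 2).mul ((isAlgebraic_algebraMap _).pow 2)
  have hX0 : 2 * algebraMap (PowerSeries ℚ) K PowerSeries.X ^ 2 ≠ 0 := by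
    have := FaithfulSMul.algebraMap_injective (Polynomial ℚ) K
    have : CharZero K := charZero_of_injective_algebraMap this
    exact mul_ne_zero two_ne_zero (pow_ne_zero 2 (by simp [PowerSeries.X_ne_zero]))
  rw [← isAlgebraic_algebraMap_iff hinjK]
  have := (key.sub isAlgebraic_one).mul hX'.inv
  rwa [add_sub_cancel_left, mul_comm, inv_mul_cancel_left₀ hX0] at this

end Ser

/-- The generating function of Gessel excursions is algebraic. -/
theorem gesselGF00_algebraic :
    ∃ P : Polynomial (Polynomial ℚ), P ≠ 0 ∧
      Polynomial.eval₂ Polynomial.coeToPowerSeries.ringHom GesselGF00 P = 0 := by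
  obtain ⟨P, hP, h⟩ := Ser.isAlgebraic_gesselGF00
  refine ⟨P, hP, ?_⟩
  rw [Polynomial.aeval_def] at h
  rwa [show Polynomial.coeToPowerSeries.ringHom = algebraMap (Polynomial ℚ) (PowerSeries ℚ) from
    RingHom.ext fun p => by rw [PowerSeries.algebraMap_apply']; simp]
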